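/- For d ≥ 5, the even halfcube H_d has exactly 2d + 2^{d−1} facets: the 2d facets H_d ∩ {x : x_i = 0} and H_d ∩ {x : x_i = 1} for i ∈ [d], and the 2^{d−1} simplex facets H_d^{e_B − e_{B^c}} for the 2^{d−1} subsets B ⊆ [d] of odd cardinality. -/

import Mathlib

/-!
Every facet `F` of the halfcube is a proper face, so by Hahn–Banach it lies in a supporting
hyperplane `φ = b` (`exists_support`). At a vertex `A` maximizing `φ`, flipping two coordinates
gives another even vertex and hence cannot increase `φ` (`flip_le`). This determines the maximal
vertices up to inclusion in one of the listed facets (`face_subset_listed`):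

* if some coefficient of `φ` vanishes, that coordinate can be flipped for free, so every coordinate
  with a nonzero coefficient is forced and the face lies in a facet `x_j = 0` or `x_j = 1`;
* otherwise let `B` be the set of positive coefficients. Two coordinates in which `A` and `B`
  disagree could be flipped profitably, so `A` and `B` differ in at most one element. If `B` is
  even then `A = B` is the only maximal vertex; if `B` is odd then `A` and `B` differ in exactly
  one element, which says that `A` is a vertex of the simplex facet of `B`.

Conversely each listed face spans a hyperplane, because the differences of its vertices generate
the kernel of its functional (`isFacet_zero`, `isFacet_one`, `isFacet_simplex`). Two facets one of
which contains the other are equal (`IsFacet.eq_of_subset`), so the list is complete. The listed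
facets are pairwise distinct (`listed_injective`), and half of the `2 ^ d` subsets are odd
(`card_odd`), which gives the count.
-/

open Set Pointwise

noncomputable section

/-- The 0/1 indicator vector of a subset `A ⊆ [d]`. -/
def eVec (d : ℕ) (A : Finset (Fin d)) : Fin d → ℝ := fun i => if i ∈ A then 1 else 0

/-- The `S`-hypersimplex `Δ(d,S)`: the convex hull of all 0/1-vectors whose
coordinate sum lies in `S`. -/
def Shyp (d : ℕ) (S : Finset ℕ) : Set (Fin d → ℝ) :=
  convexHull ℝ {x | ∃ A : Finset (Fin d), A.card ∈ S ∧ x = eVec d A}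

/-- The face of `P` in direction `c`. -/
def faceDir (d : ℕ) (P : Set (Fin d → ℝ)) (c : Fin d → ℝ) : Set (Fin d → ℝ) :=
  {x ∈ P | ∀ y ∈ P, ∑ i, c i * y i ≤ ∑ i, c i * x i}

/-- The even halfcube `H_d`. -/
def halfcube (d : ℕ) : Set (Fin d → ℝ) :=
  Shyp d ((Finset.range (d + 1)).filter (fun s => Even s))

/-- The permutahedron `Π(p)`. -/
def permPoly (d : ℕ) (p : Fin d → ℝ) : Set (Fin d → ℝ) :=
  convexHull ℝ {x | ∃ σ : Equiv.Perm (Fin d), x = fun i => p (σ i)}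

/-- A facet of a (d-dimensional) polytope `P`: a convex extreme subset of
dimension `d - 1`. -/
def IsFacet (d : ℕ) (P F : Set (Fin d → ℝ)) : Prop :=
  IsExtreme ℝ P F ∧ Convex ℝ F ∧ Module.finrank ℝ (vectorSpan ℝ F) = d - 1

/-! ### Functionals and vertices -/

open scoped symmDiff

/-- The linear functional `x ↦ ∑ i, c i * x i`. -/
def lin {d : ℕ} (c : Fin d → ℝ) : (Fin d → ℝ) →ₗ[ℝ] ℝ := ∑ i, c i • LinearMap.proj i

lemma lin_apply {d : ℕ} (c x : Fin d → ℝ) : lin c x = ∑ i, c i * x i := by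
  simp [lin]

/-- The sign vector `e_B - e_{B^c}`. -/
def sgn {d : ℕ} (B : Finset (Fin d)) : Fin d → ℝ := fun i => if i ∈ B then (1 : ℝ) else -1

lemma halfcube_eq (d : ℕ) :
    halfcube d = convexHull ℝ {x | ∃ A : Finset (Fin d), Even A.card ∧ x = eVec d A} := by
  unfold halfcube Shyp
  congr 1
  ext x
  have (A : Finset (Fin d)) : A.card < d + 1 := by
    have := A.card_le_univ
    simp at this; omega
  simp [this]

lemma convex_halfcube (d : ℕ) : Convex ℝ (halfcube d) := convex_convexHull ℝ _

lemma eVec_mem_halfcube {d : ℕ} {A : Finset (Fin d)} (hA : Even A.card) :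
    eVec d A ∈ halfcube d := by
  rw [halfcube_eq]; exact subset_convexHull ℝ _ ⟨A, hA, rfl⟩

/-- A linear inequality valid on the even vertices is valid on the halfcube, and the points where
it is tight are convex combinations of the vertices where it is tight. -/
lemma halfcube_bound {d : ℕ} (φ : (Fin d → ℝ) →ₗ[ℝ] ℝ) (b : ℝ)
    (h : ∀ A : Finset (Fin d), Even A.card → φ (eVec d A) ≤ b) {x : Fin d → ℝ}
    (hx : x ∈ halfcube d) :
    φ x ≤ b ∧ (φ x = b → x ∈ convexHull ℝ
      {x | ∃ A : Finset (Fin d), Even A.card ∧ φ (eVec d A) = b ∧ x = eVec d A}) := by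
  set V := {x | ∃ A : Finset (Fin d), Even A.card ∧ φ (eVec d A) = b ∧ x = eVec d A}
  let K : Set (Fin d → ℝ) := {x | φ x ≤ b ∧ (φ x = b → x ∈ convexHull ℝ V)}
  have hK : Convex ℝ K := by
    rw [convex_iff_forall_pos]
    rintro x ⟨hx1, hx2⟩ y ⟨hy1, hy2⟩ s t hs ht hst
    have e : φ (s • x + t • y) = s * φ x + t * φ y := by simp
    refine ⟨?_, fun hb => ?_⟩
    · rw [e]
      have := mul_le_mul_of_nonneg_left hx1 hs.le
      have := mul_le_mul_of_nonneg_left hy1 ht.le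
      have : s * b + t * b = b := by rw [← add_mul, hst, one_mul]
      linarith
    · rw [e] at hb
      have h1 : φ x = b := by
        have : t = 1 - s := by linarith
        subst this
        apply le_antisymm hx1
        by_contra hlt; push Not at hlt
        nlinarith
      have h2 : φ y = b := by
        have : s = 1 - t := by linarith
        subst this
        apply le_antisymm hy1
        by_contra hlt; push Not at hlt
        nlinarith
      exact convex_convexHull ℝ V (hx2 h1) (hy2 h2) hs.le ht.le hst
  rw [halfcube_eq] at hx
  refine convexHull_min ?_ hK hx
  rintro _ ⟨A, hA, rfl⟩
  exact ⟨h A hA, fun hb => subset_convexHull ℝ V ⟨A, hA, hb, rfl⟩⟩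

lemma eVec_nonneg {d : ℕ} (A : Finset (Fin d)) (i : Fin d) : 0 ≤ eVec d A i := by
  unfold eVec; split_ifs <;> norm_num

lemma eVec_le_one {d : ℕ} (A : Finset (Fin d)) (i : Fin d) : eVec d A i ≤ 1 := by
  unfold eVec; split_ifs <;> norm_num

lemma even_card_symmDiff {α : Type*} [DecidableEq α] (A B : Finset α) :
    Even (A ∆ B).card ↔ (Even A.card ↔ Even B.card) := by
  have h : (A ∆ B).card + 2 * (A ∩ B).card = A.card + B.card := by
    rw [Finset.symmDiff_def, Finset.card_union_of_disjoint
      (by exact disjoint_sdiff_sdiff)]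
    have h1 := Finset.card_sdiff_add_card_inter A B
    have h2 := Finset.card_sdiff_add_card_inter B A
    rw [Finset.inter_comm] at h2
    omega
  grind

lemma eVec_flip {d : ℕ} (A : Finset (Fin d)) (j : Fin d) :
    eVec d (A ∆ {j}) = eVec d A + (1 - 2 * eVec d A j) • Pi.single j 1 := by
  ext i
  by_cases hij : i = j
  · subst hij
    by_cases h : i ∈ A <;> (simp [eVec, Finset.mem_symmDiff, h]; try norm_num)
  · by_cases h : i ∈ A <;> simp [eVec, Finset.mem_symmDiff, h, hij]

lemma lin_sgn_eVec {d : ℕ} (A B : Finset (Fin d)) :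
    lin (sgn B) (eVec d A) = B.card - (A ∆ B).card := by
  have hc (C : Finset (Fin d)) : (C.card : ℝ) = ∑ i, eVec d C i := by simp [eVec]
  rw [lin_apply, hc, hc, ← Finset.sum_sub_distrib]
  refine Finset.sum_congr rfl fun i _ => ?_
  by_cases h1 : i ∈ A <;> by_cases h2 : i ∈ B <;> simp [sgn, eVec, Finset.mem_symmDiff, h1, h2]

/-! ### Faces and facets -/

/-- The slice of the halfcube on which `φ` takes the value `b`; it is a face when `φ ≤ b` holds
on the whole halfcube. -/
def face {d : ℕ} (φ : (Fin d → ℝ) →ₗ[ℝ] ℝ) (b : ℝ) : Set (Fin d → ℝ) :=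
  {x ∈ halfcube d | φ x = b}

lemma convex_face {d : ℕ} (φ : (Fin d → ℝ) →ₗ[ℝ] ℝ) (b : ℝ) : Convex ℝ (face φ b) :=
  (convex_halfcube d).inter (convex_hyperplane φ.isLinear b)

lemma eVec_mem_face {d : ℕ} {φ : (Fin d → ℝ) →ₗ[ℝ] ℝ} {b : ℝ} {A : Finset (Fin d)}
    (hA : Even A.card) (h : φ (eVec d A) = b) : eVec d A ∈ face φ b :=
  ⟨eVec_mem_halfcube hA, h⟩

lemma sub_mem_vectorSpan {d : ℕ} {F : Set (Fin d → ℝ)} {x y v : Fin d → ℝ}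
    (hx : x ∈ F) (hy : y ∈ F) (h : x - y = v) : v ∈ vectorSpan ℝ F :=
  h ▸ vsub_mem_vectorSpan ℝ hx hy

lemma vectorSpan_face_le {d : ℕ} (φ : (Fin d → ℝ) →ₗ[ℝ] ℝ) (b : ℝ) :
    vectorSpan ℝ (face φ b) ≤ LinearMap.ker φ := by
  refine Submodule.span_le.2 ?_
  rintro _ ⟨x, hx, y, hy, rfl⟩
  simp [hx.2, hy.2]

/-- A supporting hyperplane `φ = b` cuts out a facet as soon as the differences of the points of
the face span the whole kernel of `φ`. -/
lemma isFacet_face {d : ℕ} {φ : (Fin d → ℝ) →ₗ[ℝ] ℝ} {b : ℝ} (hφ : φ ≠ 0)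
    (h : ∀ A : Finset (Fin d), Even A.card → φ (eVec d A) ≤ b)
    (hk : LinearMap.ker φ ≤ vectorSpan ℝ (face φ b)) : IsFacet d (halfcube d) (face φ b) := by
  refine ⟨⟨fun x hx => hx.1, ?_⟩, convex_face φ b, ?_⟩
  · rintro x hx y hy z ⟨_, hz⟩ ⟨s, t, hs, ht, hst, rfl⟩
    refine ⟨hx, ?_⟩
    have hx1 := (halfcube_bound φ b h hx).1
    have hy1 := (halfcube_bound φ b h hy).1
    have e : φ (s • x + t • y) = s * φ x + t * φ y := by simp
    rw [e] at hz
    have : t = 1 - s := by linarith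
    subst this
    apply le_antisymm hx1
    by_contra hlt; push Not at hlt
    nlinarith
  · rw [le_antisymm (vectorSpan_face_le φ b) hk]
    have := Module.Dual.finrank_ker_add_one_of_ne_zero (K := ℝ) (f := φ) hφ
    simp at this
    omega

/-- A nonempty convex set has a point from which one can move a little inside the set in every
direction of its span. -/
lemma exists_relint {d : ℕ} {F : Set (Fin d → ℝ)} (hF : Convex ℝ F) (hne : F.Nonempty) :
    ∃ z ∈ F, ∀ u ∈ vectorSpan ℝ F, ∃ ε : ℝ, 0 < ε ∧ z + ε • u ∈ F := by
  obtain ⟨z, hz⟩ := hne.intrinsicInterior hF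
  obtain ⟨y, hy, rfl⟩ := mem_intrinsicInterior.1 hz
  refine ⟨y, intrinsicInterior_subset hz, fun u hu => ?_⟩
  have hmem (ε : ℝ) : (y : Fin d → ℝ) + ε • u ∈ affineSpan ℝ F := by
    rw [add_comm]
    refine AffineSubspace.vadd_mem_of_mem_direction ?_ y.2
    rw [direction_affineSpan]
    exact Submodule.smul_mem _ _ hu
  let g : ℝ → affineSpan ℝ F := fun ε => ⟨y + ε • u, hmem ε⟩
  have hg : Continuous g := by
    refine Continuous.subtype_mk ?_ _
    fun_prop
  have h0 : g 0 = y := by ext; simp [g]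
  have hn : g ⁻¹' interior ((↑) ⁻¹' F) ∈ nhds (0 : ℝ) :=
    hg.continuousAt.preimage_mem_nhds (isOpen_interior.mem_nhds (h0 ▸ hy))
  obtain ⟨ε, hε, hsub⟩ := Metric.mem_nhds_iff.1 hn
  refine ⟨ε / 2, by positivity, ?_⟩
  have : ε / 2 ∈ Metric.ball (0 : ℝ) ε := by
    rw [Metric.mem_ball, Real.dist_eq, sub_zero, abs_of_pos (by positivity)]; linarith
  exact interior_subset (s := ((↑) ⁻¹' F : Set (affineSpan ℝ F))) (hsub this)

/-- An extreme set containing `z` contains every point `h` for which the segment from `h` to `z`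
can be prolonged beyond `z`. -/
lemma extreme_mem {d : ℕ} {P F : Set (Fin d → ℝ)} (hF : IsExtreme ℝ P F) {z h : Fin d → ℝ}
    (hz : z ∈ F) (hh : h ∈ P) {ε : ℝ} (hε : 0 < ε) (hm : z + ε • (z - h) ∈ P) : h ∈ F := by
  refine hF.2 hh hm hz ⟨ε / (1 + ε), 1 / (1 + ε), by positivity, by positivity, by field_simp; ring,
    ?_⟩
  ext i
  simp only [Pi.add_apply, Pi.smul_apply, Pi.sub_apply, smul_eq_mul]
  field_simp
  ring

lemma IsFacet.nonempty {d : ℕ} (hd : 2 ≤ d) {P F : Set (Fin d → ℝ)} (hF : IsFacet d P F) :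
    F.Nonempty := by
  rw [nonempty_iff_ne_empty]
  rintro rfl
  have := hF.2.2
  rw [vectorSpan_empty, finrank_bot] at this
  omega

/-- Two comparable facets coincide. -/
lemma IsFacet.eq_of_subset {d : ℕ} (hd : 2 ≤ d) {P F G : Set (Fin d → ℝ)} (hF : IsFacet d P F)
    (hG : IsFacet d P G) (h : F ⊆ G) : F = G := by
  refine h.antisymm fun g hg => ?_
  have hs : vectorSpan ℝ F = vectorSpan ℝ G :=
    Submodule.eq_of_le_of_finrank_eq (vectorSpan_mono ℝ h) (hF.2.2.trans hG.2.2.symm)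
  obtain ⟨z, hz, hzu⟩ := exists_relint hF.2.1 (hF.nonempty hd)
  obtain ⟨ε, hε, hm⟩ := hzu (z - g) (hs ▸ vsub_mem_vectorSpan ℝ (h hz) hg)
  exact extreme_mem hF.1 hz (hG.1.1 hg) hε (hF.1.1 hm)

/-! ### The coordinate facets -/

lemma eVec_eq_zero {d : ℕ} {A : Finset (Fin d)} {i : Fin d} : eVec d A i = 0 ↔ i ∉ A := by
  simp [eVec]

lemma eVec_eq_one {d : ℕ} {A : Finset (Fin d)} {i : Fin d} : eVec d A i = 1 ↔ i ∈ A := by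
  simp [eVec]

/-- If the vectors `e_j ± e_k` lie in a subspace, so does `e_j`. -/
lemma single_mem_of {d : ℕ} {W : Submodule ℝ (Fin d → ℝ)} {j k : Fin d}
    (h1 : (Pi.single j 1 + Pi.single k 1 : Fin d → ℝ) ∈ W)
    (h2 : (Pi.single j 1 - Pi.single k 1 : Fin d → ℝ) ∈ W) :
    (Pi.single j 1 : Fin d → ℝ) ∈ W := by
  have := W.smul_mem (1 / 2 : ℝ) (W.add_mem h1 h2)
  convert this using 1
  ext i
  simp
  ring

lemma exists_ne_three {d : ℕ} (hd : 5 ≤ d) (i j : Fin d) :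
    ∃ k l : Fin d, k ≠ i ∧ k ≠ j ∧ l ≠ i ∧ l ≠ j ∧ l ≠ k := by
  have h (s : Finset (Fin d)) (hs : s.card < 5) : ∃ k, k ∉ s := by
    by_contra! hc
    have := Finset.eq_univ_of_forall hc ▸ hs
    simp at this
    omega
  obtain ⟨k, hk⟩ := h {i, j} (Finset.card_le_two.trans_lt (by norm_num))
  obtain ⟨l, hl⟩ := h {i, j, k} (Finset.card_le_three.trans_lt (by norm_num))
  simp at hk hl
  exact ⟨k, l, hk.1, hk.2, hl.1, hl.2.1, hl.2.2⟩

/-- Every `e_j` with `j ≠ i` is a direction of the face `x_i = 0`: with two further indices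
`k, l`, the sum `e_j + e_k` and the difference `e_j - e_k` are differences of its vertices. -/
lemma single_mem_zero {d : ℕ} (hd : 5 ≤ d) {i j : Fin d} (hij : j ≠ i) :
    (Pi.single j 1 : Fin d → ℝ) ∈ vectorSpan ℝ (face (LinearMap.proj i) (0 : ℝ)) := by
  obtain ⟨k, l, hki, hkj, hli, hlj, hlk⟩ := exists_ne_three hd i j
  apply single_mem_of (k := k)
  · refine sub_mem_vectorSpan (x := eVec d {j, k}) (y := eVec d ∅) (eVec_mem_face ?_ ?_)
      (eVec_mem_face ?_ ?_) ?_
    · rw [Finset.card_pair hkj.symm]; decide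
    · simp [eVec_eq_zero, hij.symm, hki.symm]
    · simp
    · simp [eVec_eq_zero]
    · ext m; simp [eVec, Pi.single_apply]; grind
  · refine sub_mem_vectorSpan (x := eVec d {j, l}) (y := eVec d {k, l}) (eVec_mem_face ?_ ?_)
      (eVec_mem_face ?_ ?_) ?_
    · rw [Finset.card_pair hlj.symm]; decide
    · simp [eVec_eq_zero, hij.symm, hli.symm]
    · rw [Finset.card_pair hlk.symm]; decide
    · simp [eVec_eq_zero, hki.symm, hli.symm]
    · ext m; simp [eVec, Pi.single_apply]; grind

/-- The analogue of `single_mem_zero` for the face `x_i = 1`. -/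
lemma single_mem_one {d : ℕ} (hd : 5 ≤ d) {i j : Fin d} (hij : j ≠ i) :
    (Pi.single j 1 : Fin d → ℝ) ∈ vectorSpan ℝ (face (LinearMap.proj i) (1 : ℝ)) := by
  obtain ⟨k, l, hki, hkj, hli, hlj, hlk⟩ := exists_ne_three hd i j
  apply single_mem_of (k := k)
  · refine sub_mem_vectorSpan (x := eVec d {i, j, k, l}) (y := eVec d {i, l}) (eVec_mem_face ?_ ?_)
      (eVec_mem_face ?_ ?_) ?_
    · rw [Finset.card_insert_of_notMem (by grind), Finset.card_insert_of_notMem (by grind),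
        Finset.card_pair hlk.symm]; decide
    · simp [eVec_eq_one]
    · rw [Finset.card_pair hli.symm]; decide
    · simp [eVec_eq_one]
    · ext m; simp [eVec, Pi.single_apply]; grind
  · refine sub_mem_vectorSpan (x := eVec d {i, j}) (y := eVec d {i, k}) (eVec_mem_face ?_ ?_)
      (eVec_mem_face ?_ ?_) ?_
    · rw [Finset.card_pair hij.symm]; decide
    · simp [eVec_eq_one]
    · rw [Finset.card_pair hki.symm]; decide
    · simp [eVec_eq_one]
    · ext m; simp [eVec, Pi.single_apply]; grind

lemma ker_proj_le {d : ℕ} {W : Submodule ℝ (Fin d → ℝ)} {i : Fin d}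
    (h : ∀ j, j ≠ i → (Pi.single j 1 : Fin d → ℝ) ∈ W) :
    LinearMap.ker (LinearMap.proj i : (Fin d → ℝ) →ₗ[ℝ] ℝ) ≤ W := by
  intro x hx
  rw [pi_eq_sum_univ' x]
  refine Submodule.sum_mem _ fun j _ => ?_
  by_cases hj : j = i
  · subst hj
    have : x j = 0 := hx
    simp [this]
  · exact W.smul_mem _ (h j hj)

lemma isFacet_zero {d : ℕ} (hd : 5 ≤ d) (i : Fin d) :
    IsFacet d (halfcube d) (face (LinearMap.proj i) (0 : ℝ)) := by
  have e : face (LinearMap.proj i) (0 : ℝ) = face (-LinearMap.proj i) (0 : ℝ) := by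
    ext x; simp [face]
  have := ker_proj_le fun j (hj : j ≠ i) => single_mem_zero hd hj
  rw [e] at this ⊢
  refine isFacet_face ?_ (fun A _ => by simpa using eVec_nonneg A i) (le_trans ?_ this)
  · intro h
    have := LinearMap.congr_fun h (Pi.single i 1)
    simp at this
  · intro x hx; simpa using hx

lemma isFacet_one {d : ℕ} (hd : 5 ≤ d) (i : Fin d) :
    IsFacet d (halfcube d) (face (LinearMap.proj i) (1 : ℝ)) := by
  refine isFacet_face ?_ (fun A _ => eVec_le_one A i)
    (ker_proj_le fun j hj => single_mem_one hd hj)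
  intro h
  have := LinearMap.congr_fun h (Pi.single i 1)
  simp at this

lemma vectorSpan_halfcube {d : ℕ} (hd : 5 ≤ d) : vectorSpan ℝ (halfcube d) = ⊤ := by
  have hs (j : Fin d) : (Pi.single j 1 : Fin d → ℝ) ∈ vectorSpan ℝ (halfcube d) := by
    obtain ⟨k, _, hk, _⟩ := exists_ne_three hd j j
    exact vectorSpan_mono ℝ (fun x hx => hx.1) (single_mem_zero hd hk.symm)
  refine eq_top_iff.2 fun x _ => ?_
  rw [pi_eq_sum_univ' x]
  exact Submodule.sum_mem _ fun j _ => Submodule.smul_mem _ _ (hs j)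

/-! ### The simplex facets -/

lemma odd_card_symmDiff_pos {d : ℕ} {A B : Finset (Fin d)} (hA : Even A.card) (hB : Odd B.card) :
    1 ≤ (A ∆ B).card := by
  have h := even_card_symmDiff A B
  rw [← Nat.not_even_iff_odd] at hB
  have : ¬ Even (A ∆ B).card := by tauto
  by_contra h0
  exact this (by simp [show (A ∆ B).card = 0 by omega])

lemma even_flip {d : ℕ} {B : Finset (Fin d)} (hB : Odd B.card) (k : Fin d) :
    Even (B ∆ {k}).card := by
  rw [even_card_symmDiff]
  rw [← Nat.not_even_iff_odd] at hB
  simp [hB]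

lemma lin_sgn_flip {d : ℕ} (B : Finset (Fin d)) (k : Fin d) :
    lin (sgn B) (eVec d (B ∆ {k})) = B.card - 1 := by
  rw [lin_sgn_eVec, symmDiff_comm B, symmDiff_symmDiff_cancel_right]
  simp

lemma eVec_flip_mem {d : ℕ} {B : Finset (Fin d)} (hB : Odd B.card) (k : Fin d) :
    eVec d (B ∆ {k}) ∈ face (lin (sgn B)) (B.card - 1) :=
  eVec_mem_face (even_flip hB k) (lin_sgn_flip B k)

lemma lin_sgn_le {d : ℕ} {B : Finset (Fin d)} (hB : Odd B.card) (A : Finset (Fin d))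
    (hA : Even A.card) : lin (sgn B) (eVec d A) ≤ B.card - 1 := by
  rw [lin_sgn_eVec]
  have : (1 : ℝ) ≤ (A ∆ B).card := by exact_mod_cast odd_card_symmDiff_pos hA hB
  linarith

lemma faceDir_eq {d : ℕ} (hd : 5 ≤ d) {B : Finset (Fin d)} (hB : Odd B.card) :
    faceDir d (halfcube d) (fun i => if i ∈ B then (1 : ℝ) else -1) =
      face (lin (sgn B)) (B.card - 1) := by
  let k : Fin d := ⟨0, by omega⟩
  have hk := eVec_flip_mem hB k
  ext x
  constructor
  · rintro ⟨hx, hmax⟩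
    refine ⟨hx, le_antisymm (halfcube_bound _ _ (lin_sgn_le hB) hx).1 ?_⟩
    rw [← hk.2, lin_apply, lin_apply]
    exact hmax _ hk.1
  · rintro ⟨hx, hb⟩
    refine ⟨hx, fun y hy => ?_⟩
    have := (halfcube_bound _ _ (lin_sgn_le hB) hy).1
    rw [← hb, lin_apply, lin_apply] at this
    exact this

lemma sgn_mul_self {d : ℕ} (B : Finset (Fin d)) (k : Fin d) : sgn B k * sgn B k = 1 := by
  unfold sgn; split_ifs <;> norm_num

lemma isFacet_simplex {d : ℕ} (hd : 5 ≤ d) {B : Finset (Fin d)} (hB : Odd B.card) :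
    IsFacet d (halfcube d) (face (lin (sgn B)) (B.card - 1)) := by
  let o : Fin d := ⟨0, by omega⟩
  refine isFacet_face ?_ (lin_sgn_le hB) ?_
  · intro h
    have := LinearMap.congr_fun h (Pi.single o (sgn B o))
    simp [lin_apply, Pi.single_apply, sgn_mul_self] at this
  · intro x hx
    have hx : ∑ i, sgn B i * x i = 0 := by rw [← lin_apply]; exact hx
    -- the differences of vertices are the vectors `s_k e_k - s_o e_o`, where `s = sgn B`
    have hv (k : Fin d) : sgn B k • Pi.single k 1 - sgn B o • Pi.single o 1 ∈
        vectorSpan ℝ (face (lin (sgn B)) (B.card - 1)) := by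
      refine sub_mem_vectorSpan (eVec_flip_mem hB o) (eVec_flip_mem hB k) ?_
      have e (k : Fin d) : 1 - 2 * eVec d B k = - sgn B k := by
        unfold sgn eVec; split_ifs <;> norm_num
      rw [eVec_flip, eVec_flip, e, e]
      module
    have : x = ∑ k, (sgn B k * x k) • (sgn B k • Pi.single k 1 - sgn B o • Pi.single o 1) := by
      simp_rw [smul_sub]
      rw [Finset.sum_sub_distrib, ← Finset.sum_smul, hx, zero_smul, sub_zero]
      conv_lhs => rw [pi_eq_sum_univ' x]
      refine Finset.sum_congr rfl fun k _ => ?_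
      rw [smul_smul, mul_right_comm, sgn_mul_self, one_mul]
    rw [this]
    exact Submodule.sum_mem _ fun k _ => Submodule.smul_mem _ _ (hv k)

/-! ### Every facet is in the list -/

/-- Every facet lies in a supporting hyperplane: a facet that meets the interior of the halfcube
would be the whole halfcube. -/
lemma exists_support {d : ℕ} (hd : 5 ≤ d) {F : Set (Fin d → ℝ)} (hF : IsFacet d (halfcube d) F) :
    ∃ (φ : (Fin d → ℝ) →ₗ[ℝ] ℝ) (b : ℝ), φ ≠ 0 ∧
      (∀ A : Finset (Fin d), Even A.card → φ (eVec d A) ≤ b) ∧ F ⊆ face φ b := by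
  have hint : (interior (halfcube d)).Nonempty := by
    rw [(convex_halfcube d).interior_nonempty_iff_affineSpan_eq_top,
      AffineSubspace.affineSpan_eq_top_iff_vectorSpan_eq_top_of_nonempty]
    · exact vectorSpan_halfcube hd
    · exact ⟨_, eVec_mem_halfcube (A := ∅) (by simp)⟩
  have hdisj : Disjoint (interior (halfcube d)) F := by
    rw [Set.disjoint_left]
    intro z hz hzF
    have : F = halfcube d := by
      refine hF.1.1.antisymm fun h hh => ?_
      let g : ℝ → (Fin d → ℝ) := fun ε => z + ε • (z - h)
      have hg : Continuous g := by fun_prop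
      have hn : g ⁻¹' interior (halfcube d) ∈ nhds (0 : ℝ) :=
        hg.continuousAt.preimage_mem_nhds (isOpen_interior.mem_nhds (by simpa [g] using hz))
      obtain ⟨ε, hε, hsub⟩ := Metric.mem_nhds_iff.1 hn
      have : ε / 2 ∈ Metric.ball (0 : ℝ) ε := by
        rw [Metric.mem_ball, Real.dist_eq, sub_zero, abs_of_pos (by positivity)]; linarith
      exact extreme_mem hF.1 hzF hh (half_pos hε) (interior_subset (hsub this))
    have h2 := hF.2.2
    rw [this, vectorSpan_halfcube hd] at h2
    simp at h2
    omega
  obtain ⟨f, u, hf, h1, h2⟩ := geometric_hahn_banach_of_nonempty_interior (convex_halfcube d)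
    hF.2.1 hdisj hint (hF.nonempty (by omega))
  refine ⟨f.toLinearMap, u, ?_, fun A hA => h1 _ (eVec_mem_halfcube hA), fun x hx =>
    ⟨hF.1.1 hx, le_antisymm (h1 _ (hF.1.1 hx)) (h2 _ hx)⟩⟩
  intro h
  exact hf (ContinuousLinearMap.coe_injective h)

/-- Flipping two coordinates of an even vertex gives an even vertex, so at a maximal vertex no
such flip increases the functional. -/
lemma flip_le {d : ℕ} {φ : (Fin d → ℝ) →ₗ[ℝ] ℝ} {b : ℝ}
    (h : ∀ A : Finset (Fin d), Even A.card → φ (eVec d A) ≤ b) {A : Finset (Fin d)}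
    (hA : Even A.card) (hb : φ (eVec d A) = b) {j k : Fin d} (hjk : j ≠ k) :
    (1 - 2 * eVec d A j) * φ (Pi.single j 1) + (1 - 2 * eVec d A k) * φ (Pi.single k 1) ≤ 0 := by
  have h1 := h ((A ∆ {j}) ∆ {k}) (by simp [even_card_symmDiff, hA])
  have e : eVec d (A ∆ {j}) k = eVec d A k := by
    rw [eVec_flip]; simp [hjk.symm]
  rw [eVec_flip, e, eVec_flip, map_add, map_add, map_smul, map_smul, smul_eq_mul, smul_eq_mul,
    hb] at h1
  linarith

lemma face_subset {d : ℕ} {φ ψ : (Fin d → ℝ) →ₗ[ℝ] ℝ} {b c : ℝ}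
    (h : ∀ A : Finset (Fin d), Even A.card → φ (eVec d A) ≤ b)
    (hψ : ∀ A : Finset (Fin d), Even A.card → φ (eVec d A) = b → ψ (eVec d A) = c) :
    face φ b ⊆ face ψ c := by
  intro x hx
  refine convexHull_min ?_ (convex_face ψ c) ((halfcube_bound φ b h hx.1).2 hx.2)
  rintro _ ⟨A, hA, hb, rfl⟩
  exact eVec_mem_face hA (hψ A hA hb)

/-- Every proper face lies in one of the listed facets. -/
lemma face_subset_listed {d : ℕ} (hd : 5 ≤ d) {φ : (Fin d → ℝ) →ₗ[ℝ] ℝ} {b : ℝ} (hφ : φ ≠ 0)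
    (h : ∀ A : Finset (Fin d), Even A.card → φ (eVec d A) ≤ b) :
    (∃ i : Fin d, face φ b ⊆ face (LinearMap.proj i) (0 : ℝ) ∨
      face φ b ⊆ face (LinearMap.proj i) (1 : ℝ)) ∨
    ∃ B : Finset (Fin d), Odd B.card ∧ face φ b ⊆ face (lin (sgn B)) (B.card - 1) := by
  by_cases hz : ∃ i, φ (Pi.single i 1) = 0
  · -- A coordinate with coefficient zero can be flipped for free to repair the parity.
    obtain ⟨i, hi⟩ := hz
    obtain ⟨j, hj⟩ : ∃ j, φ (Pi.single j 1) ≠ 0 := by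
      by_contra! hall
      refine hφ (LinearMap.pi_ext' fun j => LinearMap.ext_ring ?_)
      simpa using hall j
    have hji : j ≠ i := fun e => hj (e ▸ hi)
    left
    refine ⟨j, ?_⟩
    rcases lt_or_gt_of_ne hj with hj | hj
    · left
      refine face_subset h fun A hA hb => ?_
      have := flip_le h hA hb hji
      by_contra hne
      have h1 : eVec d A j = 1 := eVec_eq_one.2 (by simpa [eVec_eq_zero] using hne)
      rw [hi, h1] at this
      linarith
    · right
      refine face_subset h fun A hA hb => ?_
      have := flip_le h hA hb hji
      by_contra hne
      have h1 : eVec d A j = 0 := eVec_eq_zero.2 (by simpa [eVec_eq_one] using hne)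
      rw [hi, h1] at this
      linarith
  · push Not at hz
    let B : Finset (Fin d) := Finset.univ.filter fun i => 0 < φ (Pi.single i 1)
    have hB (i : Fin d) : i ∈ B ↔ 0 < φ (Pi.single i 1) := by simp [B]
    -- Flipping a coordinate in which `A` and the sign pattern disagree is profitable.
    have hgain (A : Finset (Fin d)) (j : Fin d) (hj : j ∈ A ∆ B) :
        0 < (1 - 2 * eVec d A j) * φ (Pi.single j 1) := by
      rcases Finset.mem_symmDiff.1 hj with ⟨h1, h2⟩ | ⟨h1, h2⟩
      · rw [hB, not_lt] at h2
        have := lt_of_le_of_ne h2 (hz j)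
        rw [eVec_eq_one.2 h1]; linarith
      · rw [hB] at h1
        rw [eVec_eq_zero.2 h2]; linarith
    have hcard (A : Finset (Fin d)) (hA : Even A.card) (hb : φ (eVec d A) = b) :
        (A ∆ B).card ≤ 1 := by
      rw [Finset.card_le_one]
      intro j hj k hk
      by_contra hjk
      have := flip_le h hA hb hjk
      linarith [hgain A j hj, hgain A k hk]
    rcases Nat.even_or_odd B.card with hBe | hBo
    · -- The even set `B` is then the unique maximal vertex.
      have heq (A : Finset (Fin d)) (hA : Even A.card) (hb : φ (eVec d A) = b) : A = B := by
        have h1 := hcard A hA hb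
        have h2 : Even (A ∆ B).card := (even_card_symmDiff A B).2 (by tauto)
        have h3 : (A ∆ B).card = 0 := by
          obtain ⟨m, hm⟩ := h2
          omega
        exact symmDiff_eq_bot.1 (by simpa using h3)
      left
      let o : Fin d := ⟨0, by omega⟩
      refine ⟨o, ?_⟩
      by_cases ho : o ∈ B
      · right
        refine face_subset h fun A hA hb => ?_
        rw [heq A hA hb]
        exact eVec_eq_one.2 ho
      · left
        refine face_subset h fun A hA hb => ?_
        rw [heq A hA hb]
        exact eVec_eq_zero.2 ho
    · right
      refine ⟨B, hBo, face_subset h fun A hA hb => ?_⟩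
      have h1 := hcard A hA hb
      have h2 := odd_card_symmDiff_pos hA hBo
      rw [lin_sgn_eVec, le_antisymm h1 h2]
      simp

/-! ### Counting -/

/-- The list of facets: `(i, false)` and `(i, true)` index the facets `x_i = 0` and `x_i = 1`, and
an odd set `B` indexes the facet in direction `e_B - e_{B^c}`. -/
def listed (d : ℕ) : (Fin d × Bool) ⊕ {B : Finset (Fin d) // Odd B.card} → Set (Fin d → ℝ)
  | .inl (i, false) => face (LinearMap.proj i) 0
  | .inl (i, true) => face (LinearMap.proj i) 1
  | .inr B => face (lin (sgn B.1)) (B.1.card - 1)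

lemma isFacet_listed {d : ℕ} (hd : 5 ≤ d) (t) : IsFacet d (halfcube d) (listed d t) := by
  rcases t with ⟨i, _ | _⟩ | ⟨B, hB⟩
  · exact isFacet_zero hd i
  · exact isFacet_one hd i
  · exact isFacet_simplex hd hB

lemma setOf_isFacet {d : ℕ} (hd : 5 ≤ d) :
    {F : Set (Fin d → ℝ) | IsFacet d (halfcube d) F} = Set.range (listed d) := by
  ext F
  constructor
  · intro hF
    obtain ⟨φ, b, hφ, h, hsub⟩ := exists_support hd hF
    have key (t) (ht : face φ b ⊆ listed d t) : F ∈ Set.range (listed d) :=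
      ⟨t, (IsFacet.eq_of_subset (by omega) hF (isFacet_listed hd t) (hsub.trans ht)).symm⟩
    rcases face_subset_listed hd hφ h with ⟨i, hi | hi⟩ | ⟨B, hB, hs⟩
    · exact key (.inl (i, false)) hi
    · exact key (.inl (i, true)) hi
    · exact key (.inr ⟨B, hB⟩) hs
  · rintro ⟨t, rfl⟩
    exact isFacet_listed hd t

/-- Coordinate facets with different indices are told apart by their spans: `e_j` is a direction of
the facets with index `i ≠ j`, but not of those with index `j`. -/
lemma coord_face_inj {d : ℕ} (hd : 5 ≤ d) {i j : Fin d} {a b : Bool}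
    (h : listed d (.inl (i, a)) = listed d (.inl (j, b))) : i = j ∧ a = b := by
  have hij : i = j := by
    by_contra hij
    have hs : (Pi.single j 1 : Fin d → ℝ) ∈ vectorSpan ℝ (listed d (.inl (i, a))) := by
      cases a
      · exact single_mem_zero hd (Ne.symm hij)
      · exact single_mem_one hd (Ne.symm hij)
    rw [h] at hs
    have : (Pi.single j 1 : Fin d → ℝ) ∈
        LinearMap.ker (LinearMap.proj j : (Fin d → ℝ) →ₗ[ℝ] ℝ) := by
      cases b <;> exact vectorSpan_face_le _ _ hs
    simp at this
  subst hij
  refine ⟨rfl, ?_⟩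
  obtain ⟨x, hx⟩ := (isFacet_listed hd (.inl (i, a))).nonempty (by omega)
  have hx' := h ▸ hx
  by_contra hab
  cases a <;> cases b <;> simp at hab
  · have h1 : x i = 0 := hx.2
    have h2 : x i = 1 := hx'.2
    linarith
  · have h1 : x i = 1 := hx.2
    have h2 : x i = 0 := hx'.2
    linarith

/-- The vertices `B ∆ {i}` and `B ∆ {j}` of a simplex facet differ in coordinate `i`. -/
lemma coord_ne_simplex {d : ℕ} (hd : 5 ≤ d) (i : Fin d) (a : Bool)
    (B : {B : Finset (Fin d) // Odd B.card}) : listed d (.inl (i, a)) ≠ listed d (.inr B) := by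
  intro h
  obtain ⟨j, _, hji, _⟩ := exists_ne_three hd i i
  have h1 : eVec d (B.1 ∆ {i}) ∈ listed d (.inl (i, a)) := h ▸ eVec_flip_mem B.2 i
  have h2 : eVec d (B.1 ∆ {j}) ∈ listed d (.inl (i, a)) := h ▸ eVec_flip_mem B.2 j
  have h3 : eVec d (B.1 ∆ {i}) i = eVec d (B.1 ∆ {j}) i := by
    cases a <;> exact h1.2.trans h2.2.symm
  by_cases hi : i ∈ B.1 <;> simp [eVec, Finset.mem_symmDiff, hi, hji.symm] at h3

/-- If two simplex facets agree, every `B ∆ {k}` has distance one from `B'`; for distinct odd sets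
this fails for some `k`. -/
lemma simplex_inj {d : ℕ} (hd : 5 ≤ d) {B B' : {B : Finset (Fin d) // Odd B.card}}
    (h : listed d (.inr B) = listed d (.inr B')) : B = B' := by
  have hk (k : Fin d) : ((B.1 ∆ B'.1) ∆ {k}).card = 1 := by
    have h1 : eVec d (B.1 ∆ {k}) ∈ listed d (.inr B') := h ▸ eVec_flip_mem B.2 k
    have h2 : lin (sgn B'.1) (eVec d (B.1 ∆ {k})) = B'.1.card - 1 := h1.2
    rw [lin_sgn_eVec, symmDiff_right_comm] at h2
    have : (((B.1 ∆ B'.1) ∆ {k}).card : ℝ) = 1 := by linarith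
    exact_mod_cast this
  generalize hD : B.1 ∆ B'.1 = D at hk
  have hflip (k : Fin d) : (k ∈ D → D.card = 2) ∧ (k ∉ D → D.card = 0) := by
    constructor
    · intro hkD
      have e : D ∆ {k} = D.erase k := by ext x; simp [Finset.mem_symmDiff]; grind
      have := hk k
      rw [e, Finset.card_erase_of_mem hkD] at this
      omega
    · intro hkD
      have e : D ∆ {k} = insert k D := by ext x; simp [Finset.mem_symmDiff]; grind
      have := hk k
      rw [e, Finset.card_insert_of_notMem hkD] at this
      omega
  have h0 : D.card = 0 := by
    by_cases hall : ∀ k, k ∈ D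
    · have h1 := Finset.eq_univ_of_forall hall
      have h2 := (hflip ⟨0, by omega⟩).1 (hall _)
      rw [h1] at h2
      simp at h2
      omega
    · push Not at hall
      obtain ⟨k, hkD⟩ := hall
      exact (hflip k).2 hkD
  rw [Finset.card_eq_zero] at h0
  subst h0
  exact Subtype.ext (symmDiff_eq_bot.1 hD)

lemma listed_injective {d : ℕ} (hd : 5 ≤ d) : Function.Injective (listed d) := by
  rintro (⟨i, a⟩ | B) (⟨j, b⟩ | B') h
  · obtain ⟨rfl, rfl⟩ := coord_face_inj hd h
    rfl
  · exact absurd h (coord_ne_simplex hd i a B')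
  · exact absurd h.symm (coord_ne_simplex hd j b B)
  · rw [simplex_inj hd h]

/-- Flipping membership of a fixed element matches odd subsets with even ones, so exactly half of
the `2 ^ d` subsets are odd. -/
lemma card_odd {d : ℕ} (hd : 1 ≤ d) :
    Nat.card {B : Finset (Fin d) // Odd B.card} = 2 ^ (d - 1) := by
  let o : Fin d := ⟨0, by omega⟩
  let f : Finset (Fin d) ≃ Finset (Fin d) := 
    Function.Involutive.toPerm (fun B => B ∆ {o}) fun B => symmDiff_symmDiff_cancel_right {o} B
  have hf : {B : Finset (Fin d) // Odd B.card} ≃ {B : Finset (Fin d) // ¬ Odd B.card} :=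
    f.subtypeEquiv fun B => by
      change _ ↔ ¬ Odd ((B ∆ {o}).card)
      rw [Nat.not_odd_iff_even, even_card_symmDiff, ← Nat.not_even_iff_odd]
      simp
  have h1 := Nat.card_congr (Equiv.sumCompl fun B : Finset (Fin d) => Odd B.card)
  rw [Nat.card_sum, ← Nat.card_congr hf] at h1
  simp only [Nat.card_eq_fintype_card (α := Finset (Fin d)), Fintype.card_finset,
    Fintype.card_fin] at h1
  obtain ⟨e, rfl⟩ : ∃ e, d = e + 1 := ⟨d - 1, by omega⟩
  rw [pow_succ] at h1
  simp only [Nat.add_sub_cancel]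
  omega

/-- for `d ≥ 5`, the facets of the halfcube `H_d` are exactly the
`2d` coordinate facets `H_d ∩ {x_i = 0}`, `H_d ∩ {x_i = 1}` together with the
`2^(d-1)` simplex facets in directions `e_B - e_{B^c}` for `B` of odd
cardinality; in particular `H_d` has `2d + 2^(d-1)` facets. -/
theorem facets_halfcube (d : ℕ) (hd : 5 ≤ d) :
    ({F : Set (Fin d → ℝ) | IsFacet d (halfcube d) F} =
      {F | ∃ i : Fin d,
          F = halfcube d ∩ {x | x i = 0} ∨ F = halfcube d ∩ {x | x i = 1}} ∪
      {F | ∃ B : Finset (Fin d), Odd B.card ∧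
          F = faceDir d (halfcube d) (fun i => if i ∈ B then (1 : ℝ) else -1)}) ∧
    {F : Set (Fin d → ℝ) | IsFacet d (halfcube d) F}.ncard = 2 * d + 2 ^ (d - 1) := by
  rw [setOf_isFacet hd]
  constructor
  · ext F
    constructor
    · rintro ⟨⟨i, _ | _⟩ | ⟨B, hB⟩, rfl⟩
      · exact Or.inl ⟨i, Or.inl rfl⟩
      · exact Or.inl ⟨i, Or.inr rfl⟩
      · exact Or.inr ⟨B, hB, (faceDir_eq hd hB).symm⟩
    · rintro (⟨i, rfl | rfl⟩ | ⟨B, hB, rfl⟩)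
      · exact ⟨.inl (i, false), rfl⟩
      · exact ⟨.inl (i, true), rfl⟩
      · exact ⟨.inr ⟨B, hB⟩, (faceDir_eq hd hB).symm⟩
  · rw [← Nat.card_coe_set_eq, Nat.card_range_of_injective (listed_injective hd), Nat.card_sum,
      card_odd (by omega)]
    simp
    ring
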